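/- Let f be a standard solution family, set α = e^{iπ/10}, ψ₊(z,λ) = f(α·z, −α^{−2}·λ) and ψ₋(z,λ) = f(−α^{−1}·z, −α²·λ). Then λ ∈ ℂ is an eigenvalue of the imaginary cubic oscillator if and only if there exists γ ∈ ℂ such that ψ₋(z,λ) = γ·ψ₊(z,λ) for all z ∈ ℂ. -/

import Mathlib

open Complex MeasureTheory

/-- `lam` is an eigenvalue of the imaginary cubic oscillator `H = p² + i x³`. -/
def IsEigenvalueICO (lam : ℂ) : Prop :=
  ∃ ψ : ℝ → ℂ, ψ ≠ 0 ∧ ContDiff ℝ 2 ψ ∧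
    Integrable (fun x : ℝ => ‖ψ x‖ ^ 2) ∧
    ∀ x : ℝ, -(deriv (deriv ψ) x) + Complex.I * (x : ℂ) ^ 3 * ψ x = lam * ψ x

/-- `f : ℂ × ℂ → ℂ` is a standard solution family for `f'' = (z³ + λ) f`:
for each `λ` the map `z ↦ f(z,λ)` is entire and solves the ODE, and it has the
Liouville–Green asymptotics `f(z,λ) = z^{-3/4} e^{-(2/5) z^{5/2}} (1 + O(z^{-1/2}))`
as `z → ∞` in the sector `|arg z| ≤ 3π/5 - ε`, uniformly for `λ` in compact sets. -/
def IsStdSolutionFamily (f : ℂ → ℂ → ℂ) : Prop :=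
  (∀ lam : ℂ, Differentiable ℂ (fun z => f z lam) ∧
    ∀ z : ℂ, deriv (deriv (fun w => f w lam)) z = (z ^ 3 + lam) * f z lam) ∧
  (∀ ε > (0 : ℝ), ∀ L : Set ℂ, IsCompact L →
    ∃ C > (0 : ℝ), ∃ R > (0 : ℝ), ∀ lam ∈ L, ∀ z : ℂ,
      R ≤ ‖z‖ → |Complex.arg z| ≤ 3 * Real.pi / 5 - ε →
      ‖(f z lam * z ^ ((3 : ℂ) / 4) *
          Complex.exp ((2 / 5 : ℂ) * z ^ ((5 : ℂ) / 2)) - 1)‖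
        ≤ C * ‖z‖ ^ (-(1 / 2) : ℝ))

/-!
The equation `-ψ'' + i x³ ψ = λ ψ` reads `ψ'' = q ψ` with `q x = i x³ - λ`. Rotating the argument of
`f` by `α`, resp. reflecting and rotating it by `α⁻¹`, both of which lie in the sector
`|arg z| < π / 5` where `f` decays, gives a solution `ψ₊` that decays exponentially at `+∞` together
with its derivative, and a solution `ψ₋` that does so at `-∞`. The Wronskian `W` of a
square-integrable solution `ψ` and `ψ₊` is constant, and `(ψ ψ₊)' = 2 ψ ψ₊' - W`; as `ψ ψ₊` and
`ψ ψ₊'` are integrable near `+∞`, this forces `W = 0`. So an eigenfunction is a multiple of `ψ₊`, by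
symmetry also of `ψ₋`, and the two are proportional; conversely, if `ψ₋ = γ ψ₊`, then `ψ₋` decays at
both ends.
-/

open Filter Set Asymptotics Topology

/-! ### Integrability on half-lines -/

section HalfLine

variable {E : Type*} [NormedAddCommGroup E]

theorem eq_zero_of_integrableOn_Ioi_of_hasDerivAt_add_const [NormedSpace ℝ E] [CompleteSpace E]
    {g h : ℝ → E} {a : ℝ} {c : E} (hg : IntegrableOn g (Ioi a)) (hh : IntegrableOn h (Ioi a))
    (hderiv : ∀ t, HasDerivAt g (h t + c) t) : c = 0 := by
  obtain ⟨l, hl⟩ : ∃ l, Tendsto (fun t => g t - t • c) atTop (𝓝 l) := by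
    refine ⟨_, tendsto_limUnder_of_hasDerivAt_of_integrableOn_Ioi (fun t _ => ?_) hh⟩
    simpa using (hderiv t).fun_sub ((hasDerivAt_id' t).smul_const c)
  have hlim : Tendsto (fun t => g (t + 1) - g t) atTop (𝓝 c) := by
    have hdiff := ((hl.comp (tendsto_atTop_add_const_right atTop 1 tendsto_id)).sub hl).add_const c
    rw [sub_self, zero_add] at hdiff
    refine hdiff.congr fun t => ?_
    simp only [Function.comp_apply, id_eq, add_smul, one_smul]
    abel
  have hshift : IntegrableOn (fun t => g (t + 1)) (Ioi a) := by
    have hg' : IntegrableOn g (Ioi (a + 1)) := hg.mono_set (Ioi_subset_Ioi (by linarith))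
    simpa [Function.comp_def] using
      ((measurePreserving_add_right volume (1 : ℝ)).integrableOn_comp_preimage
        (measurableEmbedding_addRight 1)).2 hg'
  refine IntegrableAtFilter.eq_zero_of_tendsto
    ⟨Ioi a, Ioi_mem_atTop a, hshift.sub hg⟩ (fun s hs => ?_) hlim
  obtain ⟨b, hb⟩ := mem_atTop_sets.1 hs
  exact top_unique (Real.volume_Ici (a := b) ▸ measure_mono hb)

theorem memLp_of_memLp_Ioi_of_memLp_comp_neg_Ioi {f : ℝ → E} {p : ENNReal}
    (hpos : MemLp f p (volume.restrict (Ioi 0)))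
    (hneg : MemLp (fun x => f (-x)) p (volume.restrict (Ioi 0))) : MemLp f p := by
  have hIio : MemLp f p (volume.restrict (Iio 0)) := by
    simpa [Function.comp_def] using hneg.comp_measurePreserving
      ((Measure.measurePreserving_neg (volume : Measure ℝ)).restrict_preimage measurableSet_Ioi)
  have hIic : MemLp f p (volume.restrict (Ioi 0)ᶜ) := by
    rwa [compl_Ioi, ← Measure.restrict_congr_set Iio_ae_eq_Iic]
  classical simpa using MemLp.piecewise measurableSet_Ioi hpos hIic

theorem memLp_two_Ioi_of_isBigO_exp_neg {f : ℝ → E} (hf : Continuous f) {b : ℝ} (hb : 0 < b)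
    (hO : f =O[atTop] fun x => Real.exp (-b * x)) (a : ℝ) :
    MemLp f 2 (volume.restrict (Ioi a)) := by
  rw [memLp_two_iff_integrable_sq_norm hf.aestronglyMeasurable]
  refine integrable_of_isBigO_exp_neg (b := 2 * b) (by positivity) (by fun_prop) ?_
  refine (hO.norm_left.pow 2).congr_right fun x => ?_
  rw [← Real.exp_nat_mul]
  congr 1
  push_cast
  ring

end HalfLine

/-! ### Solutions of `y'' = q y` on the real line -/

theorem eq_zero_of_hasDerivAt_clm_apply {E : Type*} [NormedAddCommGroup E] [NormedSpace ℝ E]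
    {A : ℝ → E →L[ℝ] E} (hA : Continuous A) {u : ℝ → E} (hu : ∀ t, HasDerivAt u (A t (u t)) t)
    {t₀ : ℝ} (h₀ : u t₀ = 0) : u = 0 := by
  funext t
  obtain ⟨a, b, ht, ht₀⟩ : ∃ a b, t ∈ Ioo a b ∧ t₀ ∈ Ioo a b :=
    ⟨min t t₀ - 1, max t t₀ + 1, by grind, by grind⟩
  obtain ⟨K, hK⟩ : ∃ K, ∀ s ∈ Icc a b, ‖A s‖ ≤ K :=
    isCompact_Icc.exists_bound_of_continuousOn hA.continuousOn
  refine ODE_solution_unique_of_mem_Ioo (v := fun s => A s) (s := fun _ => univ) (g := 0)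
    (K := K.toNNReal) (fun s hs => ?_) ht₀ (fun s _ => ⟨hu s, trivial⟩) (fun s _ => ?_) h₀ ht
  · refine ((A s).lipschitz.weaken ?_).lipschitzOnWith
    exact NNReal.le_toNNReal_of_coe_le (hK s (Ioo_subset_Icc_self hs))
  · simp

section SecondOrder

variable {𝕜 : Type*} [RCLike 𝕜]

/-- `y` solves the stationary Schrödinger equation `y'' = q y` on the real line. -/
structure IsSchrodingerSolution (q y : ℝ → 𝕜) : Prop where
  differentiable : Differentiable ℝ y
  hasDerivAt_deriv : ∀ x, HasDerivAt (deriv y) (q x * y x) x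

/-- The Wronskian `y z' - y' z` of two functions on the real line. -/
noncomputable def wronskian (y z : ℝ → 𝕜) (x : ℝ) : 𝕜 :=
  y x * deriv z x - deriv y x * z x

/-- A recessive solution of `y'' = q y` at `+∞`, encoded as a nonzero solution which is
square-integrable at `+∞` together with its derivative. Recessive solutions at `-∞` are handled by
reflecting `q` and `y`. -/
structure IsRecessiveSolution (q y : ℝ → 𝕜) : Prop extends IsSchrodingerSolution q y where
  ne_zero : y ≠ 0
  memLp : MemLp y 2 (volume.restrict (Ioi 0))
  memLp_deriv : MemLp (deriv y) 2 (volume.restrict (Ioi 0))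

variable {q y z : ℝ → 𝕜}

namespace IsSchrodingerSolution

theorem hasDerivAt (hy : IsSchrodingerSolution q y) (x : ℝ) : HasDerivAt y (deriv y x) x :=
  (hy.differentiable x).hasDerivAt

theorem contDiff_two (hy : IsSchrodingerSolution q y) (hq : Continuous q) : ContDiff ℝ 2 y := by
  rw [show (2 : WithTop ℕ∞) = 1 + 1 from rfl, contDiff_succ_iff_deriv, contDiff_one_iff_deriv]
  refine ⟨hy.differentiable, by simp, fun x => (hy.hasDerivAt_deriv x).differentiableAt, ?_⟩
  rw [funext fun x => (hy.hasDerivAt_deriv x).deriv]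
  exact hq.mul hy.differentiable.continuous

theorem comp_neg (hy : IsSchrodingerSolution q y) :
    IsSchrodingerSolution (fun x => q (-x)) (fun x => y (-x)) where
  differentiable := hy.differentiable.comp differentiable_neg
  hasDerivAt_deriv x := by
    rw [funext (deriv_comp_neg y)]
    simpa using ((hy.hasDerivAt_deriv (-x)).scomp x (hasDerivAt_neg x)).fun_neg

theorem sub_const_mul (hy : IsSchrodingerSolution q y) (hz : IsSchrodingerSolution q z) (c : 𝕜) :
    IsSchrodingerSolution q (fun x => y x - c * z x) where
  differentiable := hy.differentiable.sub (hz.differentiable.const_mul c)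
  hasDerivAt_deriv x := by
    rw [funext fun t => ((hy.hasDerivAt t).fun_sub ((hz.hasDerivAt t).const_mul c)).deriv]
    refine ((hy.hasDerivAt_deriv x).fun_sub ((hz.hasDerivAt_deriv x).const_mul c)).congr_deriv ?_
    ring

theorem eq_zero_of_initial_eq_zero (hy : IsSchrodingerSolution q y) (hq : Continuous q) {x₀ : ℝ}
    (h₀ : y x₀ = 0) (h₁ : deriv y x₀ = 0) : y = 0 := by
  let A : ℝ → 𝕜 × 𝕜 →L[ℝ] 𝕜 × 𝕜 := fun t =>
    .inl ℝ 𝕜 𝕜 ∘L .snd ℝ 𝕜 𝕜 + q t • (.inr ℝ 𝕜 𝕜 ∘L .fst ℝ 𝕜 𝕜)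
  have hA : Continuous A := continuous_const.add (hq.smul continuous_const)
  have hu : (fun t => (y t, deriv y t)) = 0 :=
    eq_zero_of_hasDerivAt_clm_apply hA (t₀ := x₀)
      (fun t => by simpa [A] using (hy.hasDerivAt t).prodMk (hy.hasDerivAt_deriv t))
      (by simp [h₀, h₁])
  exact funext fun t => congrArg Prod.fst (congrFun hu t)

theorem wronskian_eq (hy : IsSchrodingerSolution q y) (hz : IsSchrodingerSolution q z)
    (x x' : ℝ) : wronskian y z x = wronskian y z x' := by
  have hderiv (t : ℝ) : HasDerivAt (wronskian y z) 0 t := by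
    refine (((hy.hasDerivAt t).mul (hz.hasDerivAt_deriv t)).sub
      ((hy.hasDerivAt_deriv t).mul (hz.hasDerivAt t))).congr_deriv ?_
    ring
  exact is_const_of_deriv_eq_zero (fun t => (hderiv t).differentiableAt)
    (fun t => (hderiv t).deriv) x x'

theorem exists_eq_const_mul_of_wronskian_eq_zero (hy : IsSchrodingerSolution q y)
    (hz : IsSchrodingerSolution q z) (hq : Continuous q) {x₀ : ℝ} (hz₀ : z x₀ ≠ 0)
    (hW : wronskian y z x₀ = 0) : ∃ c : 𝕜, ∀ x, y x = c * z x := by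
  have hzero : (fun x => y x - y x₀ / z x₀ * z x) = 0 := by
    refine (hy.sub_const_mul hz _).eq_zero_of_initial_eq_zero hq (x₀ := x₀)
      (by simp [hz₀]) ?_
    rw [((hy.hasDerivAt x₀).fun_sub ((hz.hasDerivAt x₀).const_mul _)).deriv]
    field_simp
    rw [wronskian] at hW
    linear_combination -hW
  exact ⟨y x₀ / z x₀, fun x => sub_eq_zero.1 (congrFun hzero x)⟩

theorem wronskian_eq_zero_of_memLp (hy : IsSchrodingerSolution q y)
    (hz : IsSchrodingerSolution q z) {a : ℝ} (hyL : MemLp y 2 (volume.restrict (Ioi a)))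
    (hzL : MemLp z 2 (volume.restrict (Ioi a)))
    (hzL' : MemLp (deriv z) 2 (volume.restrict (Ioi a))) (x : ℝ) : wronskian y z x = 0 := by
  have hyz : IntegrableOn (y * z) (Ioi a) := hyL.integrable_mul hzL
  have hyz' : IntegrableOn (fun t => 2 * (y t * deriv z t)) (Ioi a) :=
    (hyL.integrable_mul hzL').const_mul 2
  rw [← neg_eq_zero]
  refine eq_zero_of_integrableOn_Ioi_of_hasDerivAt_add_const hyz hyz' fun t => ?_
  refine ((hy.hasDerivAt t).mul (hz.hasDerivAt t)).congr_deriv ?_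
  rw [hy.wronskian_eq hz x t, wronskian]
  ring

end IsSchrodingerSolution

theorem IsRecessiveSolution.exists_eq_const_mul_of_memLp (hz : IsRecessiveSolution q z)
    (hq : Continuous q) (hy : IsSchrodingerSolution q y)
    (hyL : MemLp y 2 (volume.restrict (Ioi 0))) : ∃ c : 𝕜, ∀ x, y x = c * z x := by
  obtain ⟨x₀, hx₀⟩ := Function.ne_iff.1 hz.ne_zero
  exact hy.exists_eq_const_mul_of_wronskian_eq_zero hz.toIsSchrodingerSolution hq hx₀
    (hy.wronskian_eq_zero_of_memLp hz.toIsSchrodingerSolution hyL hz.memLp hz.memLp_deriv x₀)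

theorem exists_memLp_solution_iff_proportional {u v : ℝ → 𝕜} (hq : Continuous q)
    (hu : IsRecessiveSolution q u)
    (hv : IsRecessiveSolution (fun x => q (-x)) (fun x => v (-x))) :
    (∃ y, y ≠ 0 ∧ IsSchrodingerSolution q y ∧ MemLp y 2) ↔ ∃ γ : 𝕜, ∀ x, v x = γ * u x := by
  constructor
  · rintro ⟨y, hy₀, hy, hyL⟩
    have hyL' : MemLp (fun x => y (-x)) 2 :=
      hyL.comp_measurePreserving (Measure.measurePreserving_neg volume)
    obtain ⟨a, ha⟩ := hu.exists_eq_const_mul_of_memLp hq hy (hyL.restrict _)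
    obtain ⟨b, hb⟩ := hv.exists_eq_const_mul_of_memLp (hq.comp continuous_neg) hy.comp_neg
      (hyL'.restrict _)
    have hb' (x : ℝ) : y x = b * v x := by simpa using hb (-x)
    have hb₀ : b ≠ 0 := by
      rintro rfl
      exact hy₀ (funext fun x => by simpa using hb' x)
    refine ⟨a / b, fun x => ?_⟩
    rw [div_mul_eq_mul_div, eq_div_iff hb₀, mul_comm, ← hb', ha]
  · rintro ⟨γ, hγ⟩
    have hvL : MemLp v 2 (volume.restrict (Ioi 0)) := by
      rw [funext hγ]
      exact hu.memLp.const_mul γ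
    refine ⟨v, fun h => hv.ne_zero ?_, ?_,
      memLp_of_memLp_Ioi_of_memLp_comp_neg_Ioi hvL hv.memLp⟩
    · simp only [h, Pi.zero_apply]
      rfl
    · simpa using hv.toIsSchrodingerSolution.comp_neg

end SecondOrder

theorem isEigenvalueICO_iff_exists_memLp_solution {lam : ℂ} :
    IsEigenvalueICO lam ↔ ∃ ψ : ℝ → ℂ, ψ ≠ 0 ∧
      IsSchrodingerSolution (fun x : ℝ => I * (x : ℂ) ^ 3 - lam) ψ ∧ MemLp ψ 2 := by
  refine exists_congr fun ψ => and_congr_right fun _ => ⟨?_, ?_⟩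
  · rintro ⟨hC2, hint, hode⟩
    refine ⟨⟨hC2.differentiable (by norm_num), fun x => ?_⟩,
      (memLp_two_iff_integrable_sq_norm hC2.continuous.aestronglyMeasurable).2 hint⟩
    have hderiv : Differentiable ℝ (deriv ψ) :=
      (contDiff_succ_iff_deriv (n := 1).1 hC2).2.2.differentiable one_ne_zero
    refine (hderiv x).hasDerivAt.congr_deriv ?_
    linear_combination -hode x
  · rintro ⟨hψ, hL⟩
    refine ⟨hψ.contDiff_two (by fun_prop), hL.integrable_norm_pow two_ne_zero, fun x => ?_⟩
    rw [(hψ.hasDerivAt_deriv x).deriv]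
    ring

/-! ### Entire functions along rays and in sectors -/

section Entire

theorem eq_of_differentiable_of_forall_ofReal_eq {E : Type*} [NormedAddCommGroup E]
    [NormedSpace ℂ E] [CompleteSpace E] {g h : ℂ → E} (hg : Differentiable ℂ g)
    (hh : Differentiable ℂ h) (heq : ∀ x : ℝ, g x = h x) : g = h := by
  refine AnalyticOnNhd.eq_of_frequently_eq (z₀ := 0) (fun z _ => hg.analyticAt z)
    (fun z _ => hh.analyticAt z) ?_
  have hreal : Tendsto ((↑) : ℝ → ℂ) (𝓝[≠] 0) (𝓝[≠] 0) := by
    simpa using continuous_ofReal.continuousWithinAt.tendsto_nhdsWithin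
      (s := {(0 : ℝ)}ᶜ) (t := {(0 : ℂ)}ᶜ) (x := 0) fun x hx => by simpa using hx
  exact hreal.frequently (Frequently.of_forall heq)

/-- The filter of points tending to infinity in the closed sector `|arg z| ≤ θ`. -/
noncomputable def sectorAtInfinity (θ : ℝ) : Filter ℂ :=
  Bornology.cobounded ℂ ⊓ 𝓟 {z | |arg z| ≤ θ}

theorem tendsto_norm_sectorAtInfinity (θ : ℝ) : Tendsto norm (sectorAtInfinity θ) atTop :=
  tendsto_norm_cobounded_atTop.mono_left inf_le_left

theorem eventually_abs_arg_le_sectorAtInfinity (θ : ℝ) :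
    ∀ᶠ z in sectorAtInfinity θ, |arg z| ≤ θ :=
  eventually_inf_principal.2 (Eventually.of_forall fun _ h => h)

variable {g : ℂ → ℂ} {a : ℂ} {θ : ℝ}

theorem tendsto_ray_add_sectorAtInfinity (ha : a ∈ slitPlane) (haθ : |arg a| < θ) (r : ℝ) :
    Tendsto (fun p : ℝ × ℂ => a * p.1 + p.2) (atTop ×ˢ 𝓟 (Metric.closedBall 0 r))
      (sectorAtInfinity θ) := by
  set l : Filter (ℝ × ℂ) := atTop ×ˢ 𝓟 (Metric.closedBall 0 r)
  have hpos : ∀ᶠ p : ℝ × ℂ in l, 0 < p.1 := tendsto_fst.eventually (eventually_gt_atTop 0)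
  have hscale : ∀ᶠ p : ℝ × ℂ in l, (p.1 : ℂ) * (a + (p.1 : ℂ)⁻¹ * p.2) = a * p.1 + p.2 := by
    filter_upwards [hpos] with p hp
    have : (p.1 : ℂ) ≠ 0 := ofReal_ne_zero.2 hp.ne'
    field_simp
  have hdir : Tendsto (fun p : ℝ × ℂ => a + (p.1 : ℂ)⁻¹ * p.2) l (𝓝 a) := by
    have hinv : Tendsto (fun p : ℝ × ℂ => (p.1 : ℂ)⁻¹) l (𝓝 0) := by
      have hreal : Tendsto (fun p : ℝ × ℂ => p.1⁻¹) l (𝓝 0) :=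
        tendsto_inv_atTop_zero.comp tendsto_fst
      exact_mod_cast (continuous_ofReal.tendsto 0).comp hreal
    have hbdd : IsBoundedUnder (· ≤ ·) l (norm ∘ Prod.snd) :=
      isBoundedUnder_of_eventually_le (a := r)
        (eventually_prod_principal_iff.2 (Eventually.of_forall fun _ u hu => by simpa using hu))
    simpa using (hinv.zero_mul_isBoundedUnder_le hbdd).const_add a
  refine tendsto_inf.2 ⟨?_, tendsto_principal.2 ?_⟩
  · have hnorm := tendsto_fst.atTop_mul_pos (norm_pos_iff.2 (slitPlane_ne_zero ha)) hdir.norm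
    rw [← tendsto_norm_atTop_iff_cobounded]
    refine hnorm.congr' ?_
    filter_upwards [hpos, hscale] with p hp hps
    rw [← hps, norm_mul, norm_real, Real.norm_of_nonneg hp.le]
  · have harg := (continuousAt_arg ha).abs.tendsto.comp hdir
    filter_upwards [hpos, hscale, harg.eventually_lt_const haθ] with p hp hps hlt
    rw [← hps, arg_real_mul _ hp]
    exact hlt.le

theorem tendsto_ray_sectorAtInfinity (ha : a ∈ slitPlane) (haθ : |arg a| < θ) :
    Tendsto (fun x : ℝ => a * x) atTop (sectorAtInfinity θ) := by
  have hconst : Tendsto (fun x : ℝ => (x, (0 : ℂ))) atTop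
      (atTop ×ˢ 𝓟 (Metric.closedBall 0 1)) :=
    tendsto_id.prodMk (tendsto_principal.2 (by simp))
  simpa [Function.comp_def] using (tendsto_ray_add_sectorAtInfinity ha haθ 1).comp hconst

theorem isBigO_deriv_ray_exp_neg (hg : Differentiable ℂ g) {b : ℝ} (hb : 0 ≤ b)
    (hO : g =O[sectorAtInfinity θ] fun z => Real.exp (-b * ‖z‖)) (ha : a ∈ slitPlane)
    (haθ : |arg a| < θ) :
    (fun x : ℝ => deriv g (a * x)) =O[atTop] fun x => Real.exp (-(b * ‖a‖) * x) := by
  obtain ⟨C, hC, hbound⟩ := hO.exists_pos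
  have hball := eventually_prod_principal_iff.1
    ((tendsto_ray_add_sectorAtInfinity ha haθ 1).eventually hbound.bound)
  refine IsBigO.of_bound (C * Real.exp b) ?_
  filter_upwards [hball, eventually_ge_atTop 0] with x hx hx₀
  have hsphere : ∀ w ∈ Metric.sphere (a * x : ℂ) 1,
      ‖g w‖ ≤ C * Real.exp b * Real.exp (-(b * ‖a‖) * x) := by
    intro w hw
    rw [mem_sphere_iff_norm] at hw
    have hnorm : ‖a‖ * x - 1 ≤ ‖w‖ := by
      have := norm_sub_norm_le (a * x : ℂ) w
      rw [norm_sub_rev, hw, norm_mul, norm_real, Real.norm_of_nonneg hx₀] at this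
      linarith
    have hw' := hx (w - a * x) (by simp [hw])
    rw [add_sub_cancel, Real.norm_of_nonneg (Real.exp_pos _).le] at hw'
    rw [mul_assoc, ← Real.exp_add]
    refine hw'.trans (mul_le_mul_of_nonneg_left (Real.exp_le_exp.2 ?_) hC.le)
    nlinarith
  have := norm_deriv_le_of_forall_mem_sphere_norm_le one_pos hg.diffContOnCl hsphere
  simpa using this

theorem hasDerivAt_ray (hg : Differentiable ℂ g) (a : ℂ) (x : ℝ) :
    HasDerivAt (fun x : ℝ => g (a * x)) (a * deriv g (a * x)) x := by
  have hlin : HasDerivAt (fun x : ℝ => a * (x : ℂ)) a x := by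
    simpa using (ofRealCLM.hasDerivAt (x := x)).const_mul a
  exact (HasDerivAt.comp x (hg (a * x)).hasDerivAt hlin).congr_deriv (mul_comm _ _)

theorem isSchrodingerSolution_ray {Q : ℂ → ℂ} (hg : Differentiable ℂ g)
    (hode : ∀ z, deriv (deriv g) z = Q z * g z) (a : ℂ) :
    IsSchrodingerSolution (fun x : ℝ => a ^ 2 * Q (a * x)) (fun x : ℝ => g (a * x)) where
  differentiable x := (hasDerivAt_ray hg a x).differentiableAt
  hasDerivAt_deriv x := by
    rw [funext fun t => (hasDerivAt_ray hg a t).deriv]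
    refine ((hasDerivAt_ray hg.deriv a x).const_mul a).congr_deriv ?_
    rw [hode]
    ring

theorem isRecessiveSolution_ray {Q : ℂ → ℂ} (hg : Differentiable ℂ g)
    (hode : ∀ z, deriv (deriv g) z = Q z * g z) {b : ℝ} (hb : 0 < b)
    (hO : g =O[sectorAtInfinity θ] fun z => Real.exp (-b * ‖z‖))
    (hne : ∀ᶠ z in sectorAtInfinity θ, g z ≠ 0) (ha : a ∈ slitPlane) (haθ : |arg a| < θ) :
    IsRecessiveSolution (fun x : ℝ => a ^ 2 * Q (a * x)) (fun x : ℝ => g (a * x)) where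
  toIsSchrodingerSolution := isSchrodingerSolution_ray hg hode a
  ne_zero h := by
    obtain ⟨x, hx⟩ := ((tendsto_ray_sectorAtInfinity ha haθ).eventually hne).exists
    exact hx (congrFun h x)
  memLp := by
    have hray : (fun x : ℝ => g (a * x)) =O[atTop] fun x => Real.exp (-(b * ‖a‖) * x) := by
      refine (hO.comp_tendsto (tendsto_ray_sectorAtInfinity ha haθ)).congr' .rfl ?_
      filter_upwards [eventually_ge_atTop 0] with x hx
      simp [abs_of_nonneg hx, mul_assoc]
    exact memLp_two_Ioi_of_isBigO_exp_neg (hg.continuous.comp (by fun_prop))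
      (mul_pos hb (norm_pos_iff.2 (slitPlane_ne_zero ha))) hray 0
  memLp_deriv := by
    rw [funext fun t => (hasDerivAt_ray hg a t).deriv]
    exact (memLp_two_Ioi_of_isBigO_exp_neg (hg.deriv.continuous.comp (by fun_prop))
      (mul_pos hb (norm_pos_iff.2 (slitPlane_ne_zero ha)))
      (isBigO_deriv_ray_exp_neg hg hb.le hO ha haθ) 0).const_mul a

end Entire

/-! ### Decay of standard solution families -/

theorem rpow_mul_cos_le_re_cpow {s θ : ℝ} (hs : 0 ≤ s) (hsθ : s * θ ≤ Real.pi) {z : ℂ}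
    (hz : |arg z| ≤ θ) : ‖z‖ ^ s * Real.cos (s * θ) ≤ (z ^ (s : ℂ)).re := by
  rw [cpow_ofReal_re, ← Real.cos_abs (arg z * s), abs_mul, abs_of_nonneg hs, mul_comm _ s]
  gcongr
  exact Real.cos_le_cos_of_nonneg_of_le_pi (by positivity) hsθ (by gcongr)

theorem eventually_mul_norm_le_re_cpow {s θ : ℝ} (hs : 1 < s) (hθ₀ : 0 ≤ θ)
    (hsθ : s * θ < Real.pi / 2) (b : ℝ) :
    ∀ᶠ z in sectorAtInfinity θ, b * ‖z‖ ≤ (z ^ (s : ℂ)).re := by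
  have hcos : 0 < Real.cos (s * θ) :=
    Real.cos_pos_of_mem_Ioo ⟨by linarith [Real.pi_pos, mul_nonneg (by linarith : 0 ≤ s) hθ₀], hsθ⟩
  have hpow : Tendsto (fun z : ℂ => ‖z‖ ^ (s - 1) * Real.cos (s * θ)) (sectorAtInfinity θ) atTop :=
    ((tendsto_rpow_atTop (sub_pos.2 hs)).comp
      (tendsto_norm_sectorAtInfinity θ)).atTop_mul_const hcos
  filter_upwards [hpow.eventually_ge_atTop b, eventually_abs_arg_le_sectorAtInfinity θ,
    (tendsto_norm_sectorAtInfinity θ).eventually_gt_atTop 0] with z hb harg hz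
  calc b * ‖z‖ ≤ ‖z‖ ^ (s - 1) * Real.cos (s * θ) * ‖z‖ := by gcongr
    _ = ‖z‖ ^ s * Real.cos (s * θ) := by
      rw [Real.rpow_sub_one hz.ne']
      field_simp
    _ ≤ (z ^ (s : ℂ)).re :=
      rpow_mul_cos_le_re_cpow (by linarith) (by linarith [Real.pi_pos]) harg

namespace IsStdSolutionFamily

variable {f : ℂ → ℂ → ℂ} {a : ℂ} {θ : ℝ}

theorem tendsto_mul_cpow_mul_exp (hf : IsStdSolutionFamily f) (μ : ℂ)
    (hθ : θ < 3 * Real.pi / 5) :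
    Tendsto (fun z => f z μ * z ^ (3 / 4 : ℂ) * exp (2 / 5 * z ^ (5 / 2 : ℂ)))
      (sectorAtInfinity θ) (𝓝 1) := by
  obtain ⟨C, -, R, -, hLG⟩ := hf.2 (3 * Real.pi / 5 - θ) (by linarith) {μ} isCompact_singleton
  have herr : Tendsto (fun z : ℂ => C * ‖z‖ ^ (-(1 / 2) : ℝ)) (sectorAtInfinity θ) (𝓝 0) := by
    simpa using ((tendsto_rpow_neg_atTop one_half_pos).comp
      (tendsto_norm_sectorAtInfinity θ)).const_mul C
  rw [tendsto_iff_norm_sub_tendsto_zero]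
  refine squeeze_zero' (Eventually.of_forall fun _ => norm_nonneg _) ?_ herr
  filter_upwards [(tendsto_norm_sectorAtInfinity θ).eventually_ge_atTop R,
    eventually_abs_arg_le_sectorAtInfinity θ] with z hzR hzθ
  exact hLG μ rfl z hzR (by linarith)

theorem eventually_ne_zero (hf : IsStdSolutionFamily f) (μ : ℂ) (hθ : θ < 3 * Real.pi / 5) :
    ∀ᶠ z in sectorAtInfinity θ, f z μ ≠ 0 := by
  filter_upwards [(hf.tendsto_mul_cpow_mul_exp μ hθ).eventually_ne one_ne_zero] with z hz h₀
  simp [h₀] at hz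

theorem isBigO_exp_neg (hf : IsStdSolutionFamily f) (μ : ℂ) (hθ₀ : 0 ≤ θ) (hθ : θ < Real.pi / 5)
    (b : ℝ) : (fun z => f z μ) =O[sectorAtInfinity θ] fun z => Real.exp (-b * ‖z‖) := by
  have hLG := (hf.tendsto_mul_cpow_mul_exp (θ := θ) μ (by linarith)).isBigO_one ℝ
  obtain ⟨C, hbound⟩ := hLG.bound
  refine IsBigO.of_bound C ?_
  filter_upwards [hbound, (tendsto_norm_sectorAtInfinity θ).eventually_ge_atTop 1,
    eventually_mul_norm_le_re_cpow (s := 5 / 2) (by norm_num) hθ₀ (by linarith) (5 / 2 * b)]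
    with z hz hz₁ hre
  have hP : 1 ≤ ‖z ^ (3 / 4 : ℂ)‖ := by
    have := Real.one_le_rpow hz₁ (by norm_num : (0 : ℝ) ≤ 3 / 4)
    rw [← norm_cpow_real] at this
    push_cast at this
    exact this
  have hE : Real.exp (b * ‖z‖) ≤ ‖exp (2 / 5 * z ^ (5 / 2 : ℂ))‖ := by
    rw [norm_exp, Real.exp_le_exp, show (2 / 5 : ℂ) = (2 / 5 : ℝ) by norm_num, re_ofReal_mul]
    push_cast at hre
    linarith
  rw [Real.norm_of_nonneg (Real.exp_pos _).le, neg_mul, Real.exp_neg, ← div_eq_mul_inv,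
    le_div_iff₀ (Real.exp_pos _)]
  calc ‖f z μ‖ * Real.exp (b * ‖z‖)
      ≤ ‖f z μ‖ * ‖z ^ (3 / 4 : ℂ)‖ * ‖exp (2 / 5 * z ^ (5 / 2 : ℂ))‖ := by
        gcongr
        exact le_mul_of_one_le_right (norm_nonneg _) hP
    _ ≤ C := by simpa only [norm_mul, norm_one, mul_one] using hz

theorem isRecessiveSolution_rotation (hf : IsStdSolutionFamily f) (ha : a ≠ 0)
    (harg : |arg a| < Real.pi / 5) (lam : ℂ) :
    IsRecessiveSolution (fun x : ℝ => a ^ 5 * (x : ℂ) ^ 3 - lam)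
      (fun x : ℝ => f (a * x) (-(a ^ 2)⁻¹ * lam)) := by
  obtain ⟨θ, haθ, hθ⟩ := exists_between harg
  have hslit : a ∈ slitPlane :=
    mem_slitPlane_iff_arg.2 ⟨fun h => by
      rw [h, abs_of_pos Real.pi_pos] at harg
      linarith [Real.pi_pos], ha⟩
  have hpot (x : ℝ) :
      a ^ 2 * ((a * x) ^ 3 + -(a ^ 2)⁻¹ * lam) = a ^ 5 * (x : ℂ) ^ 3 - lam := by
    field_simp
    ring
  obtain ⟨hdiff, hode⟩ := hf.1 (-(a ^ 2)⁻¹ * lam)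
  simpa only [hpot] using isRecessiveSolution_ray (Q := fun z => z ^ 3 + -(a ^ 2)⁻¹ * lam)
    hdiff hode one_pos (hf.isBigO_exp_neg _ ((abs_nonneg _).trans haθ.le) hθ 1)
    (hf.eventually_ne_zero _ (by linarith [Real.pi_pos])) hslit haθ

end IsStdSolutionFamily

theorem exp_pi_mul_I_div_ten_pow_five : exp (Real.pi * I / 10) ^ 5 = I := by
  calc exp (Real.pi * I / 10) ^ 5 = exp (Real.pi / 2 * I) := by
        rw [← exp_nat_mul]
        ring_nf
    _ = I := exp_pi_div_two_mul_I

theorem arg_exp_pi_mul_I_div_ten : arg (exp (Real.pi * I / 10)) = Real.pi / 10 := by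
  have hcast : (Real.pi * I / 10 : ℂ) = (Real.pi / 10 : ℝ) * I := by
    push_cast
    ring
  rw [hcast, arg_exp_mul_I, toIocMod_eq_self]
  constructor <;> linarith [Real.pi_pos]

/-- `λ` is an eigenvalue iff the two normalizable solutions
`ψ₊(z,λ) = f(αz, -α⁻²λ)` and `ψ₋(z,λ) = f(-α⁻¹z, -α²λ)` (with `α = e^{iπ/10}`)
are proportional. -/
theorem eigenvalue_iff_proportional (f : ℂ → ℂ → ℂ) (hf : IsStdSolutionFamily f)
    (α : ℂ) (hα : α = Complex.exp (Real.pi * Complex.I / 10))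
    (ψp ψm : ℂ → ℂ → ℂ)
    (hψp : ψp = fun z lam => f (α * z) (-(α ^ 2)⁻¹ * lam))
    (hψm : ψm = fun z lam => f (-α⁻¹ * z) (-α ^ 2 * lam))
    (lam : ℂ) :
    IsEigenvalueICO lam ↔ ∃ γ : ℂ, ∀ z : ℂ, ψm z lam = γ * ψp z lam := by
  have hα₀ : α ≠ 0 := hα ▸ exp_ne_zero _
  have hα5 : α ^ 5 = I := hα ▸ exp_pi_mul_I_div_ten_pow_five
  have harg : |arg α| < Real.pi / 5 := by
    rw [hα, arg_exp_pi_mul_I_div_ten, abs_of_pos] <;> linarith [Real.pi_pos]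
  have hp : IsRecessiveSolution (fun x : ℝ => I * (x : ℂ) ^ 3 - lam) (fun x : ℝ => ψp x lam) := by
    simpa only [hψp, hα5] using hf.isRecessiveSolution_rotation hα₀ harg lam
  have hm : IsRecessiveSolution (fun x : ℝ => I * ((-x : ℝ) : ℂ) ^ 3 - lam)
      (fun x : ℝ => ψm (-x : ℝ) lam) := by
    simpa [hψm, hα5, Odd.neg_pow (by decide : Odd 3)] using
      hf.isRecessiveSolution_rotation (inv_ne_zero hα₀) (by rwa [abs_arg_inv]) lam
  rw [isEigenvalueICO_iff_exists_memLp_solution,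
    exists_memLp_solution_iff_proportional (v := fun x => ψm x lam) (by fun_prop) hp hm]
  refine exists_congr fun γ => ⟨fun h => congrFun ?_, fun h x => h x⟩
  subst hψp hψm
  have hdiff (c μ : ℂ) : Differentiable ℂ fun z => f (c * z) μ :=
    (hf.1 μ).1.comp (differentiable_id.const_mul c)
  exact eq_of_differentiable_of_forall_ofReal_eq (hdiff _ _) ((hdiff _ _).const_mul γ) h
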